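/- Slack generation with custom color space: Let c' > 0 be a constant, Δ_s and χ positive integers with χ ≥ c'Δ_s, and let S ⊆ V be a set of nodes of a graph G. Run SlackGeneration on S with palette [χ]: each u ∈ S is independently activated with probability 1/20; each activated u picks a color c_u uniformly at random from [χ]; u retains c_u iff no other activated node of S adjacent to u picked the same color. Let v ∈ V be a node such that the graph G[N(v) ∩ S] contains at least m̄ non-edges, and suppose every node of S ∪ {v} has at most Δ_s neighbors in S. Then there exist constants a, b > 0 depending only on c' such that, with probability at least 1 − exp(−b·m̄/χ), the slack increase of v — that is, the number of neighbors of v that retain a color minus the number of distinct colors retained by neighbors of v — is at least a·m̄/χ. -/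

import Mathlib

open Finset

namespace SlackGen

variable {V : Type*} [Fintype V] [DecidableEq V] {χ : ℕ}

/-- An outcome of SlackGeneration: the activation status and the color choice of
each node. -/
abbrev Outcome (V : Type*) (χ : ℕ) := (V → Bool) × (V → Fin χ)

/-- Probability weight of an outcome: each node is activated independently with
probability `p₀`, and independently picks a uniformly random color from `[χ]`. -/
noncomputable def wgt (p₀ : ℝ) (χ : ℕ) {V : Type*} [Fintype V] (ω : Outcome V χ) : ℝ :=
  ∏ v : V, ((if ω.1 v then p₀ else 1 - p₀) * (1 / (χ : ℝ)))

/-- `u` picks color `c`: `u ∈ S`, `u` is activated, and `u` chose color `c`. -/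
def Picks (S : Finset V) (ω : Outcome V χ) (u : V) (c : Fin χ) : Prop :=
  u ∈ S ∧ ω.1 u = true ∧ ω.2 u = c

/-- `u ∈ S` retains its color: `u` is activated and no other activated node of `S`
adjacent to `u` chose the same color. -/
def Retains (G : SimpleGraph V) (S : Finset V) (ω : Outcome V χ) (u : V) : Prop :=
  u ∈ S ∧ ω.1 u = true ∧
    ∀ w ∈ S, w ≠ u → G.Adj u w → ω.1 w = true → ω.2 w ≠ ω.2 u

open Classical in
/-- The slack increase of `v`: the number of neighbors of `v` that retain a color
minus the number of distinct colors retained by neighbors of `v`. -/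
noncomputable def slackInc (G : SimpleGraph V) (S : Finset V) (v : V)
    (ω : Outcome V χ) : ℤ :=
  ((Finset.univ.filter fun u => G.Adj v u ∧ Retains G S ω u).card : ℤ) -
    ((Finset.univ.filter fun c : Fin χ =>
        ∃ u, G.Adj v u ∧ Retains G S ω u ∧ ω.2 u = c).card : ℤ)

open Classical in
/-- The non-edges of the graph induced on `N(v) ∩ S`: unordered pairs of distinct
non-adjacent vertices, both neighbors of `v` and both in `S`. -/
noncomputable def nbrNonEdges (G : SimpleGraph V) (v : V) (S : Finset V) :
    Finset (Sym2 V) :=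
  Finset.univ.filter fun e : Sym2 V =>
    ¬ e.IsDiag ∧ e ∉ G.edgeSet ∧ ∀ u ∈ e, G.Adj v u ∧ u ∈ S

end SlackGen

namespace SlackGen

section Partition

variable {W C : Type*} [DecidableEq C]

/-- The nodes to which a partial coloring assigns the value `y`. -/
def colorClass [Fintype W] (f : W → Option C) (y : Option C) : Finset W :=
  Finset.univ.filter fun u => f u = y

@[simp]
theorem mem_colorClass [Fintype W] {f : W → Option C} {y : Option C} {u : W} :
    u ∈ colorClass f y ↔ f u = y := by
  simp [colorClass]

/-- The weight of the value of node `u` in a random partial coloring: nodes of `R` take each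
color of `K` with weight `p` and stay uncolored with weight `q`, other nodes stay uncolored. -/
def nodeWgt [DecidableEq W] (p q : ℝ) (K : Finset C) (R : Finset W) (u : W) : Option C → ℝ
  | none => if u ∈ R then q else 1
  | some c => if u ∈ R ∧ c ∈ K then p else 0

theorem nodeWgt_nonneg [DecidableEq W] {p q : ℝ} (hp : 0 ≤ p) (hq : 0 ≤ q) (K : Finset C) (R : Finset W)
    (u : W) (y : Option C) : 0 ≤ nodeWgt p q K R u y := by
  cases y <;> simp only [nodeWgt] <;> split_ifs <;> first | assumption | norm_num

/-- Uncoloring the nodes of color `c` in the weight of a partial coloring. -/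
theorem prod_nodeWgt_insert [Fintype W] [DecidableEq W] (p q : ℝ) (K : Finset C) {c : C} (hc : c ∉ K)
    (R : Finset W) (f : W → Option C) (hR : colorClass f (some c) ⊆ R) :
    ∏ u, nodeWgt p q (insert c K) R u (f u) =
      p ^ (colorClass f (some c)).card *
        ∏ u, nodeWgt p q K (R \ colorClass f (some c)) u (if f u = some c then none else f u) := by
  classical
  have h1 : p ^ (colorClass f (some c)).card = ∏ u, if u ∈ colorClass f (some c) then p else 1 := by
    rw [Finset.prod_ite_mem, Finset.univ_inter, Finset.prod_const]
  rw [h1, ← Finset.prod_mul_distrib]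
  refine Finset.prod_congr rfl fun u _ => ?_
  by_cases h : f u = some c
  · have : u ∈ R := hR (by simpa using h)
    simp [h, nodeWgt, this]
  · rcases hfu : f u with _ | d
    · simp [nodeWgt, hfu]
    · have hd : d ≠ c := by
        rintro rfl
        exact h hfu
      simp [nodeWgt, hfu, hd]

/-- Exposing the color classes of a random partial coloring one at a time: a bound that holds for
every single exposure yields an exponential moment bound for the whole coloring. -/
theorem sum_prod_class_mul_exp_le [Fintype W] [DecidableEq W] [Fintype C] {p q s : ℝ} (hp : 0 ≤ p) (hq : 0 ≤ q) (hs : 0 ≤ s)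
    {w : Finset W → ℝ} (hw : ∀ A, 0 ≤ w A) {m : Finset W → ℝ} (hm : Monotone m) {n : ℕ}
    (step : ∀ k < n, ∀ R : Finset W,
      Real.exp (s * m R) * ∑ A ∈ R.powerset, w A * (p ^ A.card * (q + k * p) ^ (R \ A).card) ≤
        (q + (k + 1) * p) ^ R.card)
    (K : Finset C) (hK : K.card ≤ n) (R : Finset W) :
    ∑ f : W → Option C, (∏ u, nodeWgt p q K R u (f u)) *
        ((∏ c ∈ K, w (colorClass f (some c))) *
          Real.exp (s * K.card * m (R ∩ colorClass f none))) ≤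
      (q + K.card * p) ^ R.card := by
  classical
  induction K using Finset.induction_on generalizing R with
  | empty =>
    have h := Finset.prod_univ_sum (fun _ : W => (Finset.univ : Finset (Option C)))
      (fun u y => nodeWgt p q ∅ R u y)
    rw [Fintype.piFinset_univ] at h
    simp only [Finset.card_empty, Finset.prod_empty, Nat.cast_zero, mul_zero, zero_mul,
      Real.exp_zero, mul_one, add_zero]
    rw [← h]
    simp [nodeWgt, Finset.prod_ite_mem, Finset.prod_const]
  | insert c K hc ih =>
    rw [Finset.card_insert_of_notMem hc] at hK ⊢
    have hterm : ∀ A : Finset W,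
        ∑ f : W → Option C with colorClass f (some c) = A,
          (∏ u, nodeWgt p q (insert c K) R u (f u)) *
            ((∏ d ∈ insert c K, w (colorClass f (some d))) *
              Real.exp (s * (K.card + 1 : ℕ) * m (R ∩ colorClass f none))) ≤
          if A ∈ R.powerset then
            Real.exp (s * m R) * (w A * (p ^ A.card * (q + K.card * p) ^ (R \ A).card)) else 0 := by
      intro A
      split_ifs with hA
      · rw [Finset.mem_powerset] at hA
        let Φ : (W → Option C) → W → Option C := fun f u => if f u = some c then none else f u
        let F : (W → Option C) → ℝ := fun f => (∏ u, nodeWgt p q K (R \ A) u (f u)) *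
          ((∏ d ∈ K, w (colorClass f (some d))) *
            Real.exp (s * K.card * m ((R \ A) ∩ colorClass f none)))
        have hF : ∀ f, 0 ≤ F f := fun f => mul_nonneg
          (Finset.prod_nonneg fun u _ => nodeWgt_nonneg hp hq _ _ _ _)
          (mul_nonneg (Finset.prod_nonneg fun d _ => hw _) (Real.exp_nonneg _))
        have hcoef : 0 ≤ Real.exp (s * m R) * (w A * p ^ A.card) :=
          mul_nonneg (Real.exp_nonneg _) (mul_nonneg (hw A) (pow_nonneg hp _))
        have hinj : Set.InjOn Φ
            (Finset.univ.filter fun f : W → Option C => colorClass f (some c) = A) := by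
          intro f hf g hg hfg
          simp only [Finset.coe_filter, Finset.mem_univ, true_and, Set.mem_ofPred_eq] at hf hg
          funext u
          have hu := congrFun hfg u
          have hfu : f u = some c ↔ u ∈ A := by rw [← hf, mem_colorClass]
          have hgu : g u = some c ↔ u ∈ A := by rw [← hg, mem_colorClass]
          by_cases huA : u ∈ A
          · rw [hfu.2 huA, hgu.2 huA]
          · simpa [Φ, hfu, hgu, huA] using hu
        calc _ ≤ ∑ f : W → Option C with colorClass f (some c) = A,
              Real.exp (s * m R) * (w A * p ^ A.card) * F (Φ f) := by
              refine Finset.sum_le_sum fun f hf => ?_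
              have hf : colorClass f (some c) = A := (Finset.mem_filter.1 hf).2
              have hnone : (R \ A) ∩ colorClass (Φ f) none = R ∩ colorClass f none := by
                ext u
                have hfu : f u = some c ↔ u ∈ A := by rw [← hf, mem_colorClass]
                simp only [Finset.mem_inter, Finset.mem_sdiff, mem_colorClass, Φ]
                by_cases huA : u ∈ A
                · simp [hfu.2 huA, huA]
                · simp [hfu, huA]
              have hcls : ∀ d ∈ K, colorClass (Φ f) (some d) = colorClass f (some d) := by
                intro d hd
                have hdc : d ≠ c := fun h => hc (h ▸ hd)
                ext u
                simp only [mem_colorClass, Φ]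
                split_ifs with h
                · simp [h, hdc.symm]
                · rfl
              have hexp : Real.exp (s * (K.card + 1 : ℕ) * m (R ∩ colorClass f none)) ≤
                  Real.exp (s * m R) * Real.exp (s * K.card * m (R ∩ colorClass f none)) := by
                rw [← Real.exp_add]
                apply Real.exp_le_exp.2
                have := mul_le_mul_of_nonneg_left
                  (hm (Finset.inter_subset_left : R ∩ colorClass f none ⊆ R)) hs
                push_cast
                nlinarith
              rw [prod_nodeWgt_insert p q K hc R f (hf ▸ hA), Finset.prod_insert hc, hf]
              simp only [F]
              rw [hnone, Finset.prod_congr rfl fun d hd => congrArg w (hcls d hd)]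
              have h0 : 0 ≤ p ^ A.card * (∏ u, nodeWgt p q K (R \ A) u (Φ f u)) *
                  (w A * ∏ d ∈ K, w (colorClass f (some d))) :=
                mul_nonneg (mul_nonneg (pow_nonneg hp _)
                  (Finset.prod_nonneg fun u _ => nodeWgt_nonneg hp hq _ _ _ _))
                  (mul_nonneg (hw A) (Finset.prod_nonneg fun d _ => hw _))
              have := mul_le_mul_of_nonneg_left hexp h0
              simp only [Φ] at this ⊢
              linarith
          _ = Real.exp (s * m R) * (w A * p ^ A.card) *
              ∑ g ∈ (Finset.univ.filter fun f : W → Option C =>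
                colorClass f (some c) = A).image Φ, F g := by
              rw [Finset.sum_image hinj, Finset.mul_sum]
          _ ≤ Real.exp (s * m R) * (w A * p ^ A.card) * ∑ g, F g :=
              mul_le_mul_of_nonneg_left
                (Finset.sum_le_sum_of_subset_of_nonneg (Finset.subset_univ _) fun g _ _ => hF g)
                hcoef
          _ ≤ Real.exp (s * m R) * (w A * p ^ A.card) * (q + K.card * p) ^ (R \ A).card :=
              mul_le_mul_of_nonneg_left (ih (by omega) (R \ A)) hcoef
          _ = _ := by ring
      · apply le_of_eq
        refine Finset.sum_eq_zero fun f hf => ?_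
        have hf : colorClass f (some c) = A := (Finset.mem_filter.1 hf).2
        rw [Finset.mem_powerset, Finset.not_subset] at hA
        obtain ⟨u, huA, huR⟩ := hA
        have hfu : f u = some c := by rwa [← hf, mem_colorClass] at huA
        rw [Finset.prod_eq_zero (Finset.mem_univ u) (by simp [nodeWgt, hfu, huR]), zero_mul]
    rw [← Finset.sum_fiberwise Finset.univ (fun f : W → Option C => colorClass f (some c))]
    refine (Finset.sum_le_sum fun A _ => hterm A).trans ?_
    rw [Finset.sum_ite_mem, Finset.univ_inter, ← Finset.mul_sum]
    push_cast
    exact step K.card (by omega) R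

end Partition

section Exposure

variable {W : Type*} [DecidableEq W]

theorem le_sum_powerset_inter_eq {p r ρ : ℝ} (hp : 0 ≤ p) (hr : 0 ≤ r) (hT : p + r ≤ 1)
    (hρ : 0 ≤ ρ) (hρ1 : ρ ≤ 1) (hρr : ρ * (p + r) ≤ r) {e D R : Finset W} {d : ℕ}
    (he : e.card = 2) (heD : e ⊆ D) (hD : D.card ≤ d) (heR : e ⊆ R) :
    p ^ 2 * ρ ^ d * (p + r) ^ R.card ≤
      ∑ A ∈ R.powerset with A ∩ D = e, p ^ A.card * r ^ (R \ A).card := by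
  have hT0 : 0 ≤ p + r := add_nonneg hp hr
  have hdisj : ∀ B ∈ (R \ D).powerset, Disjoint B D := fun B hB =>
    Finset.disjoint_of_subset_left (Finset.mem_powerset.1 hB) Finset.sdiff_disjoint
  have hinter : ∀ B ∈ (R \ D).powerset, (e ∪ B) ∩ D = e := fun B hB => by
    rw [Finset.union_inter_distrib_right, Finset.inter_eq_left.2 heD,
      Finset.disjoint_iff_inter_eq_empty.1 (hdisj B hB), Finset.union_empty]
  have hinj : Set.InjOn (fun B => e ∪ B) ((R \ D).powerset : Set (Finset W)) := by
    intro B hB B' hB' h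
    have h1 : ∀ B ∈ (R \ D).powerset, (e ∪ B) \ D = B := fun B hB => by
      rw [Finset.union_sdiff_distrib, Finset.sdiff_eq_empty_iff_subset.2 heD,
        Finset.sdiff_eq_self_of_disjoint (hdisj B hB), Finset.empty_union]
    rw [← h1 B hB, ← h1 B' hB']
    exact congrArg (· \ D) h
  have hcardR : R.card = (R \ D).card + (((R ∩ D) \ e).card + 2) := by
    have h1 := Finset.card_sdiff_add_card_inter R D
    have h2 := Finset.card_sdiff_add_card_eq_card (Finset.subset_inter heR heD)
    omega
  have hj : ((R ∩ D) \ e).card ≤ d :=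
    (Finset.card_le_card (Finset.sdiff_subset.trans Finset.inter_subset_right)).trans hD
  have hterm : ∀ B ∈ (R \ D).powerset,
      p ^ (e ∪ B).card * r ^ (R \ (e ∪ B)).card =
        p ^ 2 * r ^ ((R ∩ D) \ e).card * (p ^ B.card * r ^ ((R \ D).card - B.card)) := by
    intro B hB
    have hBR : B ⊆ R \ D := Finset.mem_powerset.1 hB
    have h1 : (e ∪ B).card = 2 + B.card := by
      rw [Finset.card_union_of_disjoint
        (Finset.disjoint_of_subset_left heD (hdisj B hB).symm), he]
    have h2 : (R \ (e ∪ B)).card = ((R ∩ D) \ e).card + ((R \ D).card - B.card) := by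
      rw [Finset.card_sdiff_of_subset
        (Finset.union_subset heR (hBR.trans Finset.sdiff_subset)), h1]
      have := Finset.card_le_card hBR
      omega
    rw [h1, h2]
    ring
  calc p ^ 2 * ρ ^ d * (p + r) ^ R.card
      ≤ p ^ 2 * (ρ ^ ((R ∩ D) \ e).card) *
          ((p + r) ^ (R \ D).card * (p + r) ^ ((R ∩ D) \ e).card) := by
        rw [hcardR, pow_add, pow_add]
        have h1 := pow_le_pow_of_le_one hρ hρ1 hj
        have h2 : (p + r) ^ 2 ≤ 1 := pow_le_one₀ hT0 hT
        refine mul_le_mul (mul_le_mul_of_nonneg_left h1 (by positivity)) ?_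
          (by positivity) (by positivity)
        exact mul_le_mul_of_nonneg_left (mul_le_of_le_one_right (by positivity) h2) (by positivity)
    _ = p ^ 2 * (ρ * (p + r)) ^ ((R ∩ D) \ e).card * (p + r) ^ (R \ D).card := by
        rw [mul_pow]
        ring
    _ ≤ p ^ 2 * r ^ ((R ∩ D) \ e).card * (p + r) ^ (R \ D).card := by
        gcongr
    _ = ∑ A ∈ (R \ D).powerset.image (fun B => e ∪ B), p ^ A.card * r ^ (R \ A).card := by
        rw [Finset.sum_image hinj, Finset.sum_congr rfl hterm, ← Finset.mul_sum,
          Finset.sum_pow_mul_eq_add_pow]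
    _ ≤ _ := by
        refine Finset.sum_le_sum_of_subset_of_nonneg ?_ fun A _ _ => by positivity
        intro A hA
        obtain ⟨B, hB, rfl⟩ := Finset.mem_image.1 hA
        exact Finset.mem_filter.2 ⟨Finset.mem_powerset.2 (Finset.union_subset heR
          ((Finset.mem_powerset.1 hB).trans Finset.sdiff_subset)), hinter B hB⟩

/-- `A` contains exactly a member of `E` from the associated set `D e`. -/
def Isolates (E : Finset (Finset W)) (D : Finset W → Finset W) (A : Finset W) : Prop :=
  ∃ e ∈ E, A ∩ D e = e

open Classical in
theorem exp_mul_sum_powerset_isolates_le {p r ρ : ℝ} (hp : 0 ≤ p) (hr : 0 ≤ r)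
    (hT : p + r ≤ 1) (hρ : 0 ≤ ρ) (hρ1 : ρ ≤ 1) (hρr : ρ * (p + r) ≤ r)
    {E : Finset (Finset W)} {D : Finset W → Finset W} {d : ℕ}
    (he : ∀ e ∈ E, e.card = 2) (heD : ∀ e ∈ E, e ⊆ D e) (hD : ∀ e ∈ E, (D e).card ≤ d)
    (huniq : ∀ A, ∀ e ∈ E, ∀ e' ∈ E, A ∩ D e = e → A ∩ D e' = e' → e = e')
    {s : ℝ} (hs : s ≤ p ^ 2 * ρ ^ d / 2) (R : Finset W) :
    Real.exp (s * (E.filter (· ⊆ R)).card) *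
        ∑ A ∈ R.powerset, (if Isolates E D A then Real.exp (-1) else 1) *
          (p ^ A.card * r ^ (R \ A).card) ≤ (p + r) ^ R.card := by
  have hT0 : 0 ≤ p + r := add_nonneg hp hr
  have htot : ∑ A ∈ R.powerset, p ^ A.card * r ^ (R \ A).card = (p + r) ^ R.card := by
    rw [← Finset.sum_pow_mul_eq_add_pow]
    refine Finset.sum_congr rfl fun A hA => ?_
    rw [Finset.card_sdiff_of_subset (Finset.mem_powerset.1 hA)]
  have hiso : (E.filter (· ⊆ R)).card * (p ^ 2 * ρ ^ d * (p + r) ^ R.card) ≤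
      ∑ A ∈ R.powerset with Isolates E D A, p ^ A.card * r ^ (R \ A).card := by
    calc _ = ∑ e ∈ E.filter (· ⊆ R), p ^ 2 * ρ ^ d * (p + r) ^ R.card := by
          rw [Finset.sum_const, nsmul_eq_mul]
      _ ≤ ∑ e ∈ E.filter (· ⊆ R), ∑ A ∈ R.powerset with A ∩ D e = e,
            p ^ A.card * r ^ (R \ A).card := by
          refine Finset.sum_le_sum fun e h => ?_
          obtain ⟨h1, h2⟩ := Finset.mem_filter.1 h
          exact le_sum_powerset_inter_eq hp hr hT hρ hρ1 hρr (he e h1) (heD e h1) (hD e h1) h2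
      _ = ∑ A ∈ (E.filter (· ⊆ R)).biUnion fun e => R.powerset.filter fun A => A ∩ D e = e,
            p ^ A.card * r ^ (R \ A).card := by
          rw [Finset.sum_biUnion]
          intro e h e' h' hne
          refine Finset.disjoint_left.2 fun A hA hA' => hne ?_
          exact huniq A e (Finset.mem_filter.1 h).1 e' (Finset.mem_filter.1 h').1
            (Finset.mem_filter.1 hA).2 (Finset.mem_filter.1 hA').2
      _ ≤ _ := by
          refine Finset.sum_le_sum_of_subset_of_nonneg ?_ fun A _ _ => by positivity
          intro A hA
          obtain ⟨e, h, hA⟩ := Finset.mem_biUnion.1 hA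
          obtain ⟨h1, h2⟩ := Finset.mem_filter.1 hA
          exact Finset.mem_filter.2 ⟨h1, e, (Finset.mem_filter.1 h).1, h2⟩
  have hexp1 : Real.exp (-1) ≤ 1 / 2 := by
    rw [Real.exp_neg, inv_eq_one_div]
    exact one_div_le_one_div_of_le (by norm_num) (by linarith [Real.add_one_le_exp (1 : ℝ)])
  have hsum : ∑ A ∈ R.powerset, (if Isolates E D A then Real.exp (-1) else 1) *
      (p ^ A.card * r ^ (R \ A).card) ≤ (p + r) ^ R.card -
        1 / 2 * ∑ A ∈ R.powerset with Isolates E D A, p ^ A.card * r ^ (R \ A).card := by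
    rw [← htot, Finset.sum_filter, Finset.mul_sum, ← Finset.sum_sub_distrib]
    refine Finset.sum_le_sum fun A _ => ?_
    have : 0 ≤ p ^ A.card * r ^ (R \ A).card := by positivity
    split_ifs
    · nlinarith
    · linarith
  set M : ℝ := ((E.filter (· ⊆ R)).card : ℝ)
  have hM : 0 ≤ M := Nat.cast_nonneg _
  have hTn : 0 ≤ (p + r) ^ R.card := by positivity
  have hle : ∑ A ∈ R.powerset, (if Isolates E D A then Real.exp (-1) else 1) *
      (p ^ A.card * r ^ (R \ A).card) ≤ Real.exp (-(s * M)) * (p + r) ^ R.card := by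
    have h1 := Real.add_one_le_exp (-(s * M))
    have h2 := mul_le_mul_of_nonneg_right h1 hTn
    have h3 := mul_le_mul_of_nonneg_right (mul_le_mul_of_nonneg_right hs hM) hTn
    linarith
  calc _ ≤ Real.exp (s * M) * (Real.exp (-(s * M)) * (p + r) ^ R.card) :=
        mul_le_mul_of_nonneg_left hle (Real.exp_nonneg _)
    _ = _ := by rw [← mul_assoc, ← Real.exp_add]; simp

end Exposure

section LowerTail

/-- The partial coloring given by the colors of the activated nodes. -/
def toColoring {W : Type*} {χ : ℕ} (ω : Outcome W χ) : W → Option (Fin χ) :=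
  fun u => if ω.1 u then some (ω.2 u) else none

variable {W : Type*} [Fintype W] [DecidableEq W] {χ : ℕ}

theorem sum_wgt_mul_toColoring (hχ : 0 < χ) (p₀ : ℝ) (F : (W → Option (Fin χ)) → ℝ) :
    ∑ ω : Outcome W χ, wgt p₀ χ ω * F (toColoring ω) =
      ∑ f : W → Option (Fin χ),
        (∏ u, nodeWgt (p₀ * (1 / χ)) (1 - p₀) Finset.univ Finset.univ u (f u)) * F f := by
  have hχ' : (χ : ℝ) ≠ 0 := by positivity
  let wt : Bool × Fin χ → ℝ := fun z => (if z.1 then p₀ else 1 - p₀) * (1 / (χ : ℝ))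
  let π : Bool × Fin χ → Option (Fin χ) := fun z => if z.1 then some z.2 else none
  have hnode : ∀ (u : W) (y : Option (Fin χ)),
      nodeWgt (p₀ * (1 / χ)) (1 - p₀) Finset.univ Finset.univ u y = ∑ z with π z = y, wt z := by
    intro u y
    rw [Finset.sum_filter, Fintype.sum_prod_type]
    rcases y with _ | c
    · simp [nodeWgt, π, wt]
      field_simp
    · simp [nodeWgt, π, wt]
  calc ∑ ω : Outcome W χ, wgt p₀ χ ω * F (toColoring ω)
      = ∑ h : W → Bool × Fin χ, (∏ u, wt (h u)) * F (fun u => π (h u)) :=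
        (Fintype.sum_equiv (Equiv.arrowProdEquivProdArrow W (fun _ => Bool) (fun _ => Fin χ))
          _ _ fun h => rfl).symm
    _ = ∑ f : W → Option (Fin χ), ∑ h : W → Bool × Fin χ with (fun u => π (h u)) = f,
          (∏ u, wt (h u)) * F (fun u => π (h u)) :=
        (Finset.sum_fiberwise Finset.univ (fun (h : W → Bool × Fin χ) u => π (h u)) _).symm
    _ = _ := by
        refine Finset.sum_congr rfl fun f _ => ?_
        rw [Finset.prod_congr rfl fun u _ => hnode u (f u), Finset.prod_univ_sum, Finset.sum_mul]
        refine Finset.sum_congr ?_ fun h hh => ?_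
        · ext h
          simp [funext_iff]
        · rw [Fintype.mem_piFinset] at hh
          congr 2
          funext u
          exact (Finset.mem_filter.1 (hh u)).2

theorem sum_prod_nodeWgt_mul_exp_le (hχ : 0 < χ) (E : Finset (Finset W))
    (he : ∀ e ∈ E, e.card = 2) {t : ℝ} (ht : 0 ≤ t)
    (hdeg : ∀ u, t * (E.filter (u ∈ ·)).card ≤ 1 / 2) :
    ∑ f : W → Option (Fin χ),
      (∏ u, nodeWgt (1 / 20 * (1 / (χ : ℝ))) (1 - 1 / 20) Finset.univ Finset.univ u (f u)) *
        Real.exp (t * (E.card - (E.filter (· ⊆ colorClass f none)).card)) ≤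
      Real.exp (t * E.card / 5) := by
  have hχ' : (χ : ℝ) ≠ 0 := by positivity
  have hcount : ∀ f : W → Option (Fin χ),
      (E.card : ℝ) - (E.filter (· ⊆ colorClass f none)).card ≤
        ∑ u, if f u = none then (0 : ℝ) else (E.filter (u ∈ ·)).card := by
    intro f
    have h1 := Finset.card_filter_add_card_filter_not (s := E) (· ⊆ colorClass f none)
    have h2 : (E.filter (¬ · ⊆ colorClass f none)).card ≤
        ∑ u with f u ≠ none, (E.filter (u ∈ ·)).card := by
      refine le_trans (Finset.card_le_card ?_) Finset.card_biUnion_le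
      intro e h
      obtain ⟨h, h'⟩ := Finset.mem_filter.1 h
      obtain ⟨u, hu, hu'⟩ := Finset.not_subset.1 h'
      rw [mem_colorClass] at hu'
      simp only [Finset.mem_biUnion, Finset.mem_filter, Finset.mem_univ, true_and]
      exact ⟨u, hu', h, hu⟩
    have h3 : (∑ u, if f u = none then (0 : ℝ) else (E.filter (u ∈ ·)).card) =
        ((∑ u with f u ≠ none, (E.filter (u ∈ ·)).card : ℕ) : ℝ) := by
      rw [Finset.sum_filter]
      push_cast
      refine Finset.sum_congr rfl fun u _ => ?_
      by_cases h : f u = none <;> simp [h]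
    rw [h3]
    have : (E.card : ℝ) = (E.filter (· ⊆ colorClass f none)).card +
        (E.filter (¬ · ⊆ colorClass f none)).card := by exact_mod_cast h1.symm
    rw [this, add_sub_cancel_left]
    exact_mod_cast h2
  have hsum : ∑ u, ((E.filter (u ∈ ·)).card : ℝ) = 2 * E.card := by
    have h : ∑ u : W, (E.filter (u ∈ ·)).card = ∑ e ∈ E, e.card := by
      simp only [Finset.card_filter]
      rw [Finset.sum_comm]
      simp
    rw [Finset.sum_congr rfl he] at h
    rw [← Nat.cast_sum, h]
    simp [mul_comm]
  have hnode : ∀ u : W, ∑ y : Option (Fin χ),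
      nodeWgt (1 / 20 * (1 / (χ : ℝ))) (1 - 1 / 20) Finset.univ Finset.univ u y *
        Real.exp (t * if y = none then (0 : ℝ) else (E.filter (u ∈ ·)).card) ≤
      Real.exp (t * (E.filter (u ∈ ·)).card / 10) := by
    intro u
    set y := t * ((E.filter (u ∈ ·)).card : ℝ) with hy
    have hy0 : 0 ≤ y := by positivity
    have hy1 : y ≤ 1 / 2 := hdeg u
    have h1 : Real.exp y ≤ 1 + 2 * y := by
      have h := Real.one_sub_le_exp_neg y
      have h' : Real.exp y * Real.exp (-y) = 1 := by rw [← Real.exp_add]; simp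
      nlinarith [Real.exp_pos y]
    have h2 := Real.add_one_le_exp (y / 10)
    rw [Fintype.sum_option]
    simp [nodeWgt]
    rw [← hy]
    field_simp
    linarith
  calc _ ≤ ∑ f : W → Option (Fin χ), ∏ u,
        (nodeWgt (1 / 20 * (1 / (χ : ℝ))) (1 - 1 / 20) Finset.univ Finset.univ u (f u) *
          Real.exp (t * if f u = none then (0 : ℝ) else (E.filter (u ∈ ·)).card)) := by
        refine Finset.sum_le_sum fun f _ => ?_
        rw [Finset.prod_mul_distrib, ← Real.exp_sum, ← Finset.mul_sum]
        refine mul_le_mul_of_nonneg_left ?_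
          (Finset.prod_nonneg fun u _ =>
            nodeWgt_nonneg (by positivity) (by norm_num) _ _ _ _)
        exact Real.exp_le_exp.2 (mul_le_mul_of_nonneg_left (hcount f) ht)
    _ = ∏ u, ∑ y : Option (Fin χ),
        (nodeWgt (1 / 20 * (1 / (χ : ℝ))) (1 - 1 / 20) Finset.univ Finset.univ u y *
          Real.exp (t * if y = none then (0 : ℝ) else (E.filter (u ∈ ·)).card)) := by
        rw [Finset.prod_univ_sum, Fintype.piFinset_univ]
    _ ≤ ∏ u : W, Real.exp (t * (E.filter (u ∈ ·)).card / 10) := by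
        refine Finset.prod_le_prod (fun u _ => Finset.sum_nonneg fun y _ => ?_) fun u _ => hnode u
        exact mul_nonneg (nodeWgt_nonneg (by positivity) (by norm_num) _ _ _ _)
          (Real.exp_nonneg _)
    _ = _ := by
        rw [← Real.exp_sum, ← Finset.sum_div, ← Finset.mul_sum, hsum]
        congr 1
        ring

open Classical in
/-- An exponential lower tail bound for the number of colors whose class isolates a pair. -/
theorem sum_wgt_isolates_lt_le {κ : ℝ} (hκ : 0 < κ) {Δs : ℕ} (hχ : 0 < χ)
    (hΔ : κ * Δs ≤ χ) {E : Finset (Finset W)} {D : Finset W → Finset W}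
    (he : ∀ e ∈ E, e.card = 2) (heD : ∀ e ∈ E, e ⊆ D e) (hD : ∀ e ∈ E, (D e).card ≤ 3 * Δs)
    (huniq : ∀ A, ∀ e ∈ E, ∀ e' ∈ E, A ∩ D e = e → A ∩ D e' = e' → e = e')
    (hdeg : ∀ u, (E.filter (u ∈ ·)).card ≤ Δs) {a : ℝ}
    (ha : a = Real.exp (-(1 / κ)) / 4000) :
    (∑ ω : Outcome W χ,
      if ((Finset.univ.filter fun c : Fin χ =>
          Isolates E D (colorClass (toColoring ω) (some c))).card : ℝ) < a * E.card / χ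
      then wgt (1 / 20) χ ω else 0) ≤ Real.exp (-(a * E.card / χ)) := by
  have hχ0 : (0 : ℝ) < χ := by exact_mod_cast hχ
  have hχ1 : (1 : ℝ) ≤ χ := by exact_mod_cast hχ
  have ha0 : 0 < a := by rw [ha]; positivity
  have hΔχ : (Δs : ℝ) / χ ≤ 1 / κ := by
    rw [div_le_div_iff₀ hχ0 hκ]
    linarith
  set p : ℝ := 1 / 20 * (1 / (χ : ℝ)) with hp
  set q : ℝ := 1 - 1 / 20 with hq
  have hp0 : 0 < p := by positivity
  have hχp : χ * p = 1 / 20 := by rw [hp]; field_simp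
  have hp1 : p ≤ 1 / 20 := by nlinarith
  have hρd : Real.exp (-(1 / κ)) ≤ (1 - 2 * p) ^ (3 * Δs) := by
    have h1 : Real.exp (-(4 * p)) ≤ 1 - 2 * p := by
      have h := Real.add_one_le_exp (4 * p)
      have h' : Real.exp (4 * p) * Real.exp (-(4 * p)) = 1 := by rw [← Real.exp_add]; simp
      nlinarith [Real.exp_pos (-(4 * p))]
    calc Real.exp (-(1 / κ)) ≤ Real.exp ((3 * Δs : ℕ) * -(4 * p)) := by
          apply Real.exp_le_exp.2
          have : ((3 * Δs : ℕ) : ℝ) * -(4 * p) = -(3 / 5 * (Δs / χ)) := by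
            rw [hp]
            push_cast
            ring
          rw [this]
          have : (0 : ℝ) ≤ Δs / χ := by positivity
          linarith
      _ = Real.exp (-(4 * p)) ^ (3 * Δs) := Real.exp_nat_mul _ _
      _ ≤ _ := by gcongr
  set s : ℝ := 5 * a / χ ^ 2 with hs
  have hs0 : 0 ≤ s := by positivity
  have hs1 : s ≤ p ^ 2 * (1 - 2 * p) ^ (3 * Δs) / 2 := by
    have h1 : s = p ^ 2 * Real.exp (-(1 / κ)) / 2 := by
      rw [hs, hp, ha]
      ring
    rw [h1]
    gcongr
  have step : ∀ k < χ, ∀ R : Finset W,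
      Real.exp (s * (E.filter (· ⊆ R)).card) *
        ∑ A ∈ R.powerset, (if Isolates E D A then Real.exp (-1) else 1) *
          (p ^ A.card * (q + k * p) ^ (R \ A).card) ≤ (q + (k + 1) * p) ^ R.card := by
    intro k hk R
    have hkχ : ((k : ℝ) + 1) * p ≤ 1 / 20 := by
      rw [← hχp]
      gcongr
      exact_mod_cast hk
    have hkp : 0 ≤ k * p := by positivity
    have hq' : q = 19 / 20 := by norm_num [hq]
    clear_value s p q
    have h := exp_mul_sum_powerset_isolates_le (r := q + k * p) (ρ := 1 - 2 * p) hp0.le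
      (by linarith) (by linarith) (by linarith) (by linarith) (by nlinarith)
      he heD hD huniq hs1 R
    refine h.trans (le_of_eq ?_)
    ring
  have hmono : Monotone fun R : Finset W => ((E.filter (· ⊆ R)).card : ℝ) := by
    intro R R' h
    exact Nat.cast_le.2
      (Finset.card_le_card (Finset.monotone_filter_right _ fun e _ he => he.trans h))
  set X : (W → Option (Fin χ)) → ℝ := fun f =>
    ((Finset.univ.filter fun c : Fin χ => Isolates E D (colorClass f (some c))).card : ℝ) with hX
  set N : (W → Option (Fin χ)) → ℝ := fun f => ((E.filter (· ⊆ colorClass f none)).card : ℝ) with hN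
  set P : (W → Option (Fin χ)) → ℝ := fun f =>
    ∏ u, nodeWgt p q Finset.univ Finset.univ u (f u) with hP
  set t : ℝ := 5 * a / χ with ht
  have hP0 : ∀ f, 0 ≤ P f := fun f => Finset.prod_nonneg fun u _ =>
    nodeWgt_nonneg hp0.le (by norm_num) _ _ _ _
  have hfirst : ∑ f, P f * Real.exp (t * N f - X f) ≤ 1 := by
    have h := sum_prod_class_mul_exp_le (q := q) hp0.le (by norm_num) hs0
      (w := fun A => if Isolates E D A then Real.exp (-1) else 1)
      (fun A => by
        split_ifs
        · exact Real.exp_nonneg _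
        · norm_num) hmono step
      (Finset.univ : Finset (Fin χ)) (by simp) Finset.univ
    have h1 : q + ((Finset.univ : Finset (Fin χ)).card : ℝ) * p = 1 := by
      rw [Finset.card_univ, Fintype.card_fin, hχp]
      norm_num [hq]
    rw [h1, one_pow] at h
    refine le_trans (le_of_eq (Finset.sum_congr rfl fun f _ => ?_)) h
    congr 1
    have h2 : ∏ c : Fin χ, (if Isolates E D (colorClass f (some c)) then Real.exp (-1) else 1) =
        Real.exp (-X f) := by
      rw [← Finset.prod_filter, Finset.prod_const, ← Real.exp_nat_mul, mul_neg_one]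
    have h3 : s * (χ : ℝ) = t := by
      rw [hs, ht]
      field_simp
    rw [h2, ← Real.exp_add, Finset.univ_inter, Finset.card_univ, Fintype.card_fin, h3]
    congr 1
    ring
  have hsecond : ∑ f, P f * Real.exp (t * (E.card - N f)) ≤ Real.exp (t * E.card / 5) := by
    refine sum_prod_nodeWgt_mul_exp_le hχ E he (by positivity) fun u => ?_
    have h1 : (((E.filter (u ∈ ·)).card : ℕ) : ℝ) ≤ Δs := by exact_mod_cast hdeg u
    have h2 : 1 / κ * Real.exp (-(1 / κ)) ≤ 1 := by
      have h := Real.add_one_le_exp (1 / κ)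
      have h' : Real.exp (1 / κ) * Real.exp (-(1 / κ)) = 1 := by rw [← Real.exp_add]; simp
      nlinarith [Real.exp_pos (-(1 / κ))]
    calc t * (E.filter (u ∈ ·)).card ≤ t * Δs := by gcongr
      _ = 5 * a * (Δs / χ) := by rw [ht]; ring
      _ ≤ 5 * a * (1 / κ) := by gcongr
      _ = 1 / κ * Real.exp (-(1 / κ)) / 800 := by rw [ha]; ring
      _ ≤ 1 / 2 := by linarith
  set Y : ℝ := a * E.card / χ with hY
  have hY0 : 0 ≤ Y := by positivity
  have htY : t * E.card = 5 * Y := by rw [ht, hY]; ring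
  have hpoint : ∀ f, (if X f < Y then (1 : ℝ) else 0) ≤
      1 / 2 * Real.exp (-Y) * Real.exp (t * N f - X f) +
        1 / 2 * Real.exp (-(2 * Y)) * Real.exp (t * (E.card - N f)) := by
    intro f
    split_ifs with h
    · rw [mul_assoc, mul_assoc, ← Real.exp_add, ← Real.exp_add]
      have h1 := Real.add_one_le_exp (-Y + (t * N f - X f))
      have h2 := Real.add_one_le_exp (-(2 * Y) + t * (E.card - N f))
      linarith
    · positivity
  have hmain : ∑ f, P f * (if X f < Y then (1 : ℝ) else 0) ≤ Real.exp (-Y) := by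
    calc _ ≤ ∑ f, P f * (1 / 2 * Real.exp (-Y) * Real.exp (t * N f - X f) +
          1 / 2 * Real.exp (-(2 * Y)) * Real.exp (t * (E.card - N f))) :=
          Finset.sum_le_sum fun f _ => mul_le_mul_of_nonneg_left (hpoint f) (hP0 f)
      _ = 1 / 2 * Real.exp (-Y) * ∑ f, P f * Real.exp (t * N f - X f) +
          1 / 2 * Real.exp (-(2 * Y)) * ∑ f, P f * Real.exp (t * (E.card - N f)) := by
          rw [Finset.mul_sum, Finset.mul_sum, ← Finset.sum_add_distrib]
          exact Finset.sum_congr rfl fun f _ => by ring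
      _ ≤ 1 / 2 * Real.exp (-Y) * 1 +
          1 / 2 * Real.exp (-(2 * Y)) * Real.exp (t * E.card / 5) := by gcongr
      _ = Real.exp (-Y) := by
          rw [mul_assoc (1 / 2) (Real.exp (-(2 * Y))), ← Real.exp_add, htY,
            show -(2 * Y) + 5 * Y / 5 = -Y by ring]
          ring
  rw [← sum_wgt_mul_toColoring hχ (1 / 20) fun f => if X f < Y then (1 : ℝ) else 0] at hmain
  refine le_trans (le_of_eq (Finset.sum_congr rfl fun ω _ => ?_)) hmain
  rw [mul_ite, mul_one, mul_zero]

end LowerTail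

section Slack

open Classical in
/-- The nodes of `S` adjacent to `v` or to a member of `e`. -/
noncomputable def closeNodes {V : Type*} (G : SimpleGraph V) (v : V) (S : Finset V) (e : Finset V) :
    Finset V :=
  S.filter fun z => G.Adj v z ∨ ∃ u ∈ e, G.Adj u z

theorem mem_closeNodes {V : Type*} {G : SimpleGraph V} {v z : V} {S e : Finset V} :
    z ∈ closeNodes G v S e ↔ z ∈ S ∧ (G.Adj v z ∨ ∃ u ∈ e, G.Adj u z) := by
  simp only [closeNodes, Finset.mem_filter]

variable {V : Type*} [Fintype V] [DecidableEq V]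

open Classical in
/-- The vertex pairs of the non-edges of the graph induced on `N(v) ∩ S`. -/
noncomputable def nonEdgePairs (G : SimpleGraph V) (v : V) (S : Finset V) :
    Finset (Finset V) :=
  Finset.univ.filter fun e => ∃ u w, e = {u, w} ∧ u ≠ w ∧ ¬ G.Adj u w ∧
    (G.Adj v u ∧ u ∈ S) ∧ (G.Adj v w ∧ w ∈ S)

theorem mem_nonEdgePairs {G : SimpleGraph V} {v : V} {S e : Finset V} :
    e ∈ nonEdgePairs G v S ↔ ∃ u w, e = {u, w} ∧ u ≠ w ∧ ¬ G.Adj u w ∧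
      (G.Adj v u ∧ u ∈ S) ∧ (G.Adj v w ∧ w ∈ S) := by
  simp only [nonEdgePairs, Finset.mem_filter, Finset.mem_univ, true_and]

theorem card_nbrNonEdges_le (G : SimpleGraph V) (v : V) (S : Finset V) :
    (nbrNonEdges G v S).card ≤ (nonEdgePairs G v S).card := by
  classical
  refine Finset.card_le_card_of_injOn Sym2.toFinset ?_ ?_
  · intro e he
    induction e using Sym2.ind with
    | _ x y =>
      simp only [nbrNonEdges, Finset.coe_filter, Finset.mem_univ, true_and, Set.mem_ofPred_eq,
        Sym2.mk_isDiag_iff, SimpleGraph.mem_edgeSet] at he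
      refine Finset.mem_coe.2 (mem_nonEdgePairs.2 ⟨x, y, ?_, he.1, he.2.1, he.2.2 x (Sym2.mem_mk_left x y),
        he.2.2 y (Sym2.mem_mk_right x y)⟩)
      ext z
      simp
  · intro e _ e' _ h
    refine Sym2.ext fun z => ?_
    rw [← Sym2.mem_toFinset, h, Sym2.mem_toFinset]

theorem card_of_mem_nonEdgePairs {G : SimpleGraph V} {v : V} {S e : Finset V}
    (he : e ∈ nonEdgePairs G v S) : e.card = 2 := by
  obtain ⟨u, w, rfl, hne, -⟩ := mem_nonEdgePairs.1 he
  exact Finset.card_pair hne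

theorem adj_of_mem_nonEdgePairs {G : SimpleGraph V} {v : V} {S e : Finset V}
    (he : e ∈ nonEdgePairs G v S) {u : V} (hu : u ∈ e) : G.Adj v u ∧ u ∈ S := by
  obtain ⟨x, y, rfl, -, -, hx, hy⟩ := mem_nonEdgePairs.1 he
  rcases Finset.mem_insert.1 hu with rfl | hu
  · exact hx
  · rw [Finset.mem_singleton.1 hu]
    exact hy

theorem not_adj_of_mem_nonEdgePairs {G : SimpleGraph V} {v : V} {S e : Finset V}
    (he : e ∈ nonEdgePairs G v S) {u w : V} (hu : u ∈ e) (hw : w ∈ e) : ¬ G.Adj u w := by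
  obtain ⟨x, y, rfl, -, hxy, -⟩ := mem_nonEdgePairs.1 he
  simp only [Finset.mem_insert, Finset.mem_singleton] at hu hw
  rcases hu with rfl | rfl <;> rcases hw with rfl | rfl
  · exact G.loopless.irrefl _
  · exact hxy
  · exact fun h => hxy h.symm
  · exact G.loopless.irrefl _

theorem nonEdgePairs_subset_closeNodes {G : SimpleGraph V} {v : V} {S e e' : Finset V}
    (he : e ∈ nonEdgePairs G v S) : e ⊆ closeNodes G v S e' := fun _ hu =>
  have h := adj_of_mem_nonEdgePairs he hu
  mem_closeNodes.2 ⟨h.2, Or.inl h.1⟩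

theorem eq_of_inter_closeNodes {G : SimpleGraph V} {v : V} {S A e e' : Finset V}
    (he : e ∈ nonEdgePairs G v S) (he' : e' ∈ nonEdgePairs G v S)
    (h : A ∩ closeNodes G v S e = e) (h' : A ∩ closeNodes G v S e' = e') : e = e' := by
  have hsub : e ⊆ e' := by
    rw [← h']
    refine Finset.subset_inter ?_ (nonEdgePairs_subset_closeNodes he)
    rw [← h]
    exact Finset.inter_subset_left
  exact Finset.eq_of_subset_of_card_le hsub
    (by rw [card_of_mem_nonEdgePairs he, card_of_mem_nonEdgePairs he'])

theorem card_closeNodes_le {G : SimpleGraph V} [DecidableRel G.Adj] {v : V} {S : Finset V}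
    {Δs : ℕ} (hΔ : ∀ u ∈ S ∪ {v}, (G.neighborFinset u ∩ S).card ≤ Δs) {e : Finset V}
    (he : e ∈ nonEdgePairs G v S) : (closeNodes G v S e).card ≤ 3 * Δs := by
  have hsub : closeNodes G v S e ⊆
      (G.neighborFinset v ∩ S) ∪ e.biUnion fun u => G.neighborFinset u ∩ S := by
    intro z hz
    obtain ⟨hzS, hz⟩ := mem_closeNodes.1 hz
    simp only [Finset.mem_union, Finset.mem_inter, SimpleGraph.mem_neighborFinset,
      Finset.mem_biUnion]
    rcases hz with hz | ⟨u, hu, hz⟩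
    · exact Or.inl ⟨hz, hzS⟩
    · exact Or.inr ⟨u, hu, hz, hzS⟩
  have h1 := hΔ v (by simp)
  have h2 : (e.biUnion fun u => G.neighborFinset u ∩ S).card ≤ e.card * Δs :=
    Finset.card_biUnion_le_card_mul _ _ _ fun u hu =>
      hΔ u (Finset.mem_union_left _ (adj_of_mem_nonEdgePairs he hu).2)
  rw [card_of_mem_nonEdgePairs he] at h2
  have h3 := Finset.card_le_card hsub
  have h4 := Finset.card_union_le (G.neighborFinset v ∩ S)
    (e.biUnion fun u => G.neighborFinset u ∩ S)
  omega

theorem card_filter_mem_nonEdgePairs_le (G : SimpleGraph V) [DecidableRel G.Adj] (v : V)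
    (S : Finset V) (u : V) :
    ((nonEdgePairs G v S).filter (u ∈ ·)).card ≤ (G.neighborFinset v ∩ S).card := by
  have hsub : (nonEdgePairs G v S).filter (u ∈ ·) ⊆
      (G.neighborFinset v ∩ S).image fun w => {u, w} := by
    intro e he
    obtain ⟨he, hu⟩ := Finset.mem_filter.1 he
    obtain ⟨x, y, rfl, -, -, hx, hy⟩ := mem_nonEdgePairs.1 he
    simp only [Finset.mem_image, Finset.mem_inter, SimpleGraph.mem_neighborFinset]
    simp only [Finset.mem_insert, Finset.mem_singleton] at hu
    rcases hu with rfl | rfl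
    · exact ⟨y, hy, rfl⟩
    · exact ⟨x, hx, Finset.pair_comm _ _⟩
  exact (Finset.card_le_card hsub).trans Finset.card_image_le

open Classical in
/-- Every color whose class isolates a non-edge is retained by two neighbors of `v`. -/
theorem card_isolates_le_slackInc (G : SimpleGraph V) (v : V) (S : Finset V) {χ : ℕ}
    (ω : Outcome V χ) :
    ((Finset.univ.filter fun c : Fin χ => Isolates (nonEdgePairs G v S) (closeNodes G v S)
      (colorClass (toColoring ω) (some c))).card : ℤ) ≤ slackInc G S v ω := by
  set U := Finset.univ.filter fun u => G.Adj v u ∧ Retains G S ω u with hU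
  set K := Finset.univ.filter fun c : Fin χ =>
    ∃ u, G.Adj v u ∧ Retains G S ω u ∧ ω.2 u = c with hK
  set I := Finset.univ.filter fun c : Fin χ => Isolates (nonEdgePairs G v S) (closeNodes G v S)
    (colorClass (toColoring ω) (some c)) with hI
  have hclass : ∀ u c, u ∈ colorClass (toColoring ω) (some c) ↔ ω.1 u = true ∧ ω.2 u = c := by
    intro u c
    rw [mem_colorClass, toColoring]
    split_ifs with h <;> simp [h]
  have htwo : ∀ c ∈ I, 2 ≤ (U.filter fun u => ω.2 u = c).card := by
    intro c hc
    obtain ⟨-, e, he, heq⟩ := Finset.mem_filter.1 hc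
    rw [← card_of_mem_nonEdgePairs he]
    refine Finset.card_le_card fun u hu => ?_
    have hA : ∀ w ∈ e, ω.1 w = true ∧ ω.2 w = c := fun w hw =>
      (hclass w c).1 (Finset.inter_subset_left (heq.symm ▸ hw))
    obtain ⟨hvu, huS⟩ := adj_of_mem_nonEdgePairs he hu
    refine Finset.mem_filter.2 ⟨Finset.mem_filter.2
      ⟨Finset.mem_univ _, hvu, huS, (hA u hu).1, ?_⟩, (hA u hu).2⟩
    intro w hwS _ hadj hact hcol
    rw [(hA u hu).2] at hcol
    have hw : w ∈ e := by
      rw [← heq]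
      exact Finset.mem_inter.2 ⟨(hclass w c).2 ⟨hact, hcol⟩,
        mem_closeNodes.2 ⟨hwS, Or.inr ⟨u, hu, hadj⟩⟩⟩
    exact not_adj_of_mem_nonEdgePairs he hu hw hadj
  have hmaps : ∀ u ∈ U, ω.2 u ∈ K := fun u hu => by
    obtain ⟨-, h1, h2⟩ := Finset.mem_filter.1 hu
    exact Finset.mem_filter.2 ⟨Finset.mem_univ _, u, h1, h2, rfl⟩
  have hone : ∀ c ∈ K, 1 + (if c ∈ I then 1 else 0) ≤ (U.filter fun u => ω.2 u = c).card := by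
    intro c hc
    split_ifs with h
    · exact htwo c h
    · obtain ⟨-, u, h1, h2, h3⟩ := Finset.mem_filter.1 hc
      exact Finset.card_pos.2
        ⟨u, Finset.mem_filter.2 ⟨Finset.mem_filter.2 ⟨Finset.mem_univ _, h1, h2⟩, h3⟩⟩
  have hIK : I ⊆ K := by
    intro c hc
    obtain ⟨u, hu⟩ := Finset.card_pos.1 (lt_of_lt_of_le two_pos (htwo c hc))
    obtain ⟨hu, hcol⟩ := Finset.mem_filter.1 hu
    rw [← hcol]
    exact hmaps u hu
  have hcard : K.card + I.card ≤ U.card := by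
    rw [Finset.card_eq_sum_card_fiberwise hmaps]
    refine le_trans (le_of_eq ?_) (Finset.sum_le_sum hone)
    rw [Finset.sum_add_distrib, Finset.sum_ite_mem, Finset.inter_eq_right.2 hIK]
    simp
  have : slackInc G S v ω = (U.card : ℤ) - K.card := rfl
  rw [this]
  omega

end Slack

theorem sum_wgt {V : Type*} [Fintype V] [DecidableEq V] {χ : ℕ} (hχ : 0 < χ) (p₀ : ℝ) :
    ∑ ω : Outcome V χ, wgt p₀ χ ω = 1 := by
  have h := sum_wgt_mul_toColoring (W := V) hχ p₀ fun _ => 1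
  have h' := Finset.prod_univ_sum (fun _ : V => (Finset.univ : Finset (Option (Fin χ))))
    (fun u y => nodeWgt (p₀ * (1 / χ)) (1 - p₀) Finset.univ Finset.univ u y)
  rw [Fintype.piFinset_univ] at h'
  simp only [mul_one] at h
  rw [h, ← h']
  have hχ' : (χ : ℝ) ≠ 0 := by positivity
  refine Finset.prod_eq_one fun u _ => ?_
  rw [Fintype.sum_option]
  simp [nodeWgt]
  field_simp
  ring

theorem wgt_nonneg {V : Type*} [Fintype V] {χ : ℕ} {p₀ : ℝ} (h0 : 0 ≤ p₀) (h1 : p₀ ≤ 1)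
    (ω : Outcome V χ) : 0 ≤ wgt p₀ χ ω := by
  refine Finset.prod_nonneg fun u _ => mul_nonneg ?_ (by positivity)
  split_ifs <;> linarith

open Classical in
/-- **Slack generation with custom color space.** For every constant `c' > 0`
there are constants `a, b > 0` (depending only on `c'`) such that: for all
positive integers `Δs`, `χ` with `χ ≥ c'·Δs`, every set `S` of nodes of a graph
`G`, and every node `v` such that `G[N(v) ∩ S]` contains at least `mbar` non-edges
and every node of `S ∪ {v}` has at most `Δs` neighbors in `S`, running
SlackGeneration on `S` (activation probability `1/20`, palette `[χ]`) increases
the slack of `v` by at least `a·mbar/χ` with probability at least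
`1 − exp(−b·mbar/χ)`. -/
theorem slack_generation (c' : ℝ) (hc' : 0 < c') :
    ∃ a : ℝ, 0 < a ∧ ∃ b : ℝ, 0 < b ∧
      ∀ (V : Type) [Fintype V] [DecidableEq V]
        (G : SimpleGraph V) [DecidableRel G.Adj] (Δs χ : ℕ),
        0 < Δs → 0 < χ → c' * (Δs : ℝ) ≤ (χ : ℝ) →
        ∀ (S : Finset V) (v : V) (mbar : ℕ),
          mbar ≤ (nbrNonEdges G v S).card →
          (∀ u ∈ S ∪ {v}, (G.neighborFinset u ∩ S).card ≤ Δs) →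
          1 - Real.exp (-(b * (mbar : ℝ) / (χ : ℝ))) ≤
            ∑ ω : Outcome V χ,
              (if a * (mbar : ℝ) / (χ : ℝ) ≤ ((slackInc G S v ω : ℤ) : ℝ)
               then wgt (1 / 20) χ ω else 0) := by
  have ha : 0 < Real.exp (-(1 / c')) / 4000 := by positivity
  refine ⟨_, ha, _, ha, ?_⟩
  intro V _ _ G _ Δs χ hΔs hχ hΔχ S v mbar hm hΔ
  obtain ⟨a, hadef⟩ : ∃ a, a = Real.exp (-(1 / c')) / 4000 := ⟨_, rfl⟩
  rw [← hadef] at ha ⊢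
  have htail := sum_wgt_isolates_lt_le (E := nonEdgePairs G v S) (D := closeNodes G v S) hc' hχ
    hΔχ (fun e he => card_of_mem_nonEdgePairs he)
    (fun e he => nonEdgePairs_subset_closeNodes he) (fun e he => card_closeNodes_le hΔ he)
    (fun A e he e' he' => eq_of_inter_closeNodes he he')
    (fun u => by
      convert (card_filter_mem_nonEdgePairs_le G v S u).trans (hΔ v (by simp)))
    hadef
  have hm' : (mbar : ℝ) ≤ (nonEdgePairs G v S).card :=
    Nat.cast_le.2 (hm.trans (card_nbrNonEdges_le G v S))
  have hle : a * mbar / χ ≤ a * (nonEdgePairs G v S).card / χ := by gcongr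
  have hexp : Real.exp (-(a * (nonEdgePairs G v S).card / χ)) ≤ Real.exp (-(a * mbar / χ)) :=
    Real.exp_le_exp.2 (neg_le_neg hle)
  have hsplit : (1 : ℝ) ≤ (∑ ω : Outcome V χ,
        if ((Finset.univ.filter fun c : Fin χ => Isolates (nonEdgePairs G v S)
            (closeNodes G v S) (colorClass (toColoring ω) (some c))).card : ℝ) <
          a * (nonEdgePairs G v S).card / χ then wgt (1 / 20) χ ω else 0) +
      ∑ ω : Outcome V χ, (if a * (mbar : ℝ) / (χ : ℝ) ≤ ((slackInc G S v ω : ℤ) : ℝ)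
        then wgt (1 / 20) χ ω else 0) := by
    rw [← Finset.sum_add_distrib]
    refine (sum_wgt (V := V) hχ (1 / 20)).symm.trans_le (Finset.sum_le_sum fun ω _ => ?_)
    have hw : 0 ≤ wgt (1 / 20) χ ω := wgt_nonneg (by norm_num) (by norm_num) ω
    have hslack : ((Finset.univ.filter fun c : Fin χ => Isolates (nonEdgePairs G v S)
        (closeNodes G v S) (colorClass (toColoring ω) (some c))).card : ℝ) ≤
          ((slackInc G S v ω : ℤ) : ℝ) := by
      exact_mod_cast card_isolates_le_slackInc G v S ω
    split_ifs with h1 h2 h2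
    · linarith
    · linarith
    · linarith
    · exact absurd ((hle.trans (not_lt.1 h1)).trans hslack) h2
  linarith

end SlackGen
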